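/- arXiv:2006.13397 — 2 statements merged into one kernel-verified Lean document; each statement's English description precedes it below -/
import Mathlib

section
/- Let G be a connected simple graph with vertex set {0,...,n} and m edges, and let iota be an m-by-g integer matrix (g = m - n) whose columns form a Z-basis of the lattice of integral flows Flow(G). Then the abelian group Z^g / im(iota^T iota) has order equal to the number of spanning trees of G. -/
open Matrix

theorem aux_expand {m g : ℕ} (M : Matrix (Fin m) (Fin g) ℤ) :
    (Mᵀ * M).det = ∑ f : Fin g → Fin m, (∏ i, M (f i) i) * (M.submatrix f id).det := by
  have h1 : (Mᵀ * M) = fun i => ∑ k, M k i • M k := by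
    ext i j
    simp [Matrix.mul_apply, Finset.sum_apply]
  have h2 : (Mᵀ * M).det = (detRowAlternating (R := ℤ) (n := Fin g)).toMultilinearMap
      (fun i => ∑ k, M k i • M k) := by rw [h1]; rfl
  rw [h2, MultilinearMap.map_sum]
  refine Finset.sum_congr rfl fun f _ => ?_
  rw [MultilinearMap.map_smul_univ]
  rfl

theorem aux_cb {m g : ℕ} (M : Matrix (Fin m) (Fin g) ℤ) :
    (g.factorial : ℤ) * (Mᵀ * M).det = ∑ f : Fin g → Fin m, (M.submatrix f id).det ^ 2 := by
  have key : ∀ σ : Equiv.Perm (Fin g), (Mᵀ * M).det =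
      ∑ f : Fin g → Fin m, (∏ i, M (f (σ i)) i) *
        (((Equiv.Perm.sign σ : ℤˣ) : ℤ) * (M.submatrix f id).det) := by
    intro σ
    rw [aux_expand]
    refine (Fintype.sum_equiv (Equiv.arrowCongr σ.symm (Equiv.refl (Fin m))) _ _ ?_).symm
    intro f
    have : M.submatrix ((Equiv.arrowCongr σ.symm (Equiv.refl (Fin m))) f) id
        = (M.submatrix f id).submatrix σ id := by
      ext i j; simp [Equiv.arrowCongr]
    rw [this, det_permute]
    simp [Equiv.arrowCongr]
  calc (g.factorial : ℤ) * (Mᵀ * M).det = ∑ σ : Equiv.Perm (Fin g), (Mᵀ * M).det := by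
        simp [Fintype.card_perm]
    _ = ∑ σ : Equiv.Perm (Fin g), ∑ f : Fin g → Fin m, (∏ i, M (f (σ i)) i) *
        (((Equiv.Perm.sign σ : ℤˣ) : ℤ) * (M.submatrix f id).det) :=
        Finset.sum_congr rfl fun σ _ => key σ
    _ = _ := by
        rw [Finset.sum_comm]
        refine Finset.sum_congr rfl fun f _ => ?_
        rw [sq]
        nth_rewrite 2 [det_apply']
        rw [Finset.sum_mul]
        refine Finset.sum_congr rfl fun σ _ => ?_
        simp only [submatrix_apply, id, Int.cast_id]
        ring

theorem aux_card {g : ℕ} (A : Matrix (Fin g) (Fin g) ℤ) (hA : ∀ x, A *ᵥ x = 0 → x = 0) :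
    Nat.card ((Fin g → ℤ) ⧸ LinearMap.range (Matrix.toLin' A)) = A.det.natAbs := by
  have hinj : Function.Injective (Matrix.toLin' A) := by
    rw [injective_iff_map_eq_zero]
    intro x hx
    exact hA x (by simpa using hx)
  rw [← Submodule.natAbs_det_equiv _ (LinearEquiv.ofInjective (Matrix.toLin' A) hinj)]
  congr 1
  rw [← LinearMap.det_toLin']
  congr 1

theorem aux_count {m g : ℕ} (S : Finset (Fin m)) (hS : S.card = g) :
    Fintype.card {f : Fin g → Fin m // Function.Injective f ∧ Finset.univ.image f = S}
      = g.factorial := by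
  classical
  have e : (Fin g ≃ S) ≃
      {f : Fin g → Fin m // Function.Injective f ∧ Finset.univ.image f = S} :=
    { toFun := fun e => ⟨fun i => (e i : Fin m), by
          constructor
          · intro a b h
            exact e.injective (Subtype.ext h)
          · ext x
            simp only [Finset.mem_image, Finset.mem_univ, true_and]
            constructor
            · rintro ⟨i, rfl⟩; exact (e i).2
            · intro hx; exact ⟨e.symm ⟨x, hx⟩, by simp⟩⟩
      invFun := fun f => Equiv.ofBijective
          (fun i => (⟨f.1 i, (Finset.ext_iff.1 f.2.2 (f.1 i)).1
            (Finset.mem_image_of_mem _ (Finset.mem_univ i))⟩ : S)) (by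
          constructor
          · intro a b h
            exact f.2.1 (congrArg Subtype.val h)
          · rintro ⟨x, hx⟩
            have hx' := (Finset.ext_iff.1 f.2.2 x).2 hx
            obtain ⟨i, -, hi⟩ := Finset.mem_image.1 hx'
            exact ⟨i, Subtype.ext hi⟩)
      left_inv := fun e => by ext i; rfl
      right_inv := fun f => by ext i; rfl }
  rw [← Fintype.card_congr e, Fintype.card_equiv (Fintype.equivOfCardEq (by simp [hS]))]
  simp

section
variable {n m g : ℕ} {head tail : Fin m → Fin (n + 1)}
  {del : Matrix (Fin (n + 1)) (Fin m) ℤ}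

theorem aux_del (hne : ∀ k, head k ≠ tail k)
    (hdel : ∀ v k, del v k = if v = head k then 1 else if v = tail k then -1 else 0) (k : Fin m) :
    del *ᵥ (Pi.single k 1) = Pi.single (head k) 1 - Pi.single (tail k) 1 := by
  ext v
  have := hne k
  simp only [mulVec_single_one, col_apply, hdel, Pi.sub_apply, Pi.single_apply]
  by_cases h : v = head k
  · subst h; simp [this]
  · simp only [h, if_false]; split_ifs <;> simp

theorem aux_vecdel (hne : ∀ k, head k ≠ tail k)
    (hdel : ∀ v k, del v k = if v = head k then 1 else if v = tail k then -1 else 0)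
    (p : Fin (n + 1) → ℤ) (k : Fin m) :
    (p ᵥ* del) k = p (head k) - p (tail k) := by
  have h : (p ᵥ* del) k = p ⬝ᵥ (del *ᵥ Pi.single k 1) := by
    rw [dotProduct_mulVec]; simp
  rw [h, aux_del hne hdel]
  simp [dotProduct_sub]

/-- potentials along walks -/
theorem aux_walk (hne : ∀ k, head k ≠ tail k)
    (hdel : ∀ v k, del v k = if v = head k then 1 else if v = tail k then -1 else 0)
    (T : Finset (Fin m)) (u v : Fin (n + 1))
    (p : (SimpleGraph.fromEdgeSet ((fun k => s(head k, tail k)) '' (T : Set (Fin m)))).Walk u v) :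
    ∃ x : Fin m → ℤ, (∀ k ∉ T, x k = 0) ∧ del *ᵥ x = Pi.single u 1 - Pi.single v 1 := by
  induction p with
  | nil => exact ⟨0, by simp, by simp⟩
  | cons h _ ih =>
    obtain ⟨x, hx, hx'⟩ := ih
    rw [SimpleGraph.fromEdgeSet_adj] at h
    obtain ⟨⟨k, hk, hk'⟩, -⟩ := h
    have hz : ∀ j ∉ T, (Pi.single k (1 : ℤ) : Fin m → ℤ) j = 0 := by
      intro j hj
      rw [Pi.single_apply, if_neg]
      rintro rfl; exact hj hk
    simp only [Sym2.eq_iff] at hk'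
    rcases hk' with ⟨h1, h2⟩ | ⟨h1, h2⟩
    · refine ⟨x + Pi.single k 1, fun j hj => by simp [hx j hj, hz j hj], ?_⟩
      rw [mulVec_add, hx', aux_del hne hdel, h1, h2]; abel
    · refine ⟨x - Pi.single k 1, fun j hj => by simp [hx j hj, hz j hj], ?_⟩
      rw [mulVec_sub, hx', aux_del hne hdel, h1, h2]; abel

theorem aux_unit (hne : ∀ k, head k ≠ tail k)
    (hdel : ∀ v k, del v k = if v = head k then 1 else if v = tail k then -1 else 0)
    (iota : Matrix (Fin m) (Fin g) ℤ)
    (hspan : ∀ z : Fin m → ℤ, del *ᵥ z = 0 → ∃ c, iota *ᵥ c = z)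
    (f : Fin g → Fin m) (hf : Function.Injective f) (T : Finset (Fin m))
    (hT : ∀ i, f i ∉ T)
    (hc : (SimpleGraph.fromEdgeSet
      ((fun k => s(head k, tail k)) '' (T : Set (Fin m)))).Connected) :
    (iota.submatrix f id).det ^ 2 = 1 := by
  have hs : Function.Surjective (iota.submatrix f id).mulVec := by
    intro y
    have hw : ∀ i, ∃ x : Fin m → ℤ, (∀ k ∉ T, x k = 0) ∧
        del *ᵥ x = Pi.single (head (f i)) 1 - Pi.single (tail (f i)) 1 := fun i =>
      aux_walk hne hdel T _ _ (hc.preconnected (head (f i)) (tail (f i))).some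
    choose x hx hx' using hw
    obtain ⟨c, hc⟩ := hspan (∑ i, y i • (Pi.single (f i) 1 - x i)) (by
      rw [mulVec_sum]
      refine Finset.sum_eq_zero fun i _ => ?_
      rw [mulVec_smul, mulVec_sub, hx', aux_del hne hdel, sub_self, smul_zero])
    refine ⟨c, ?_⟩
    ext j
    have : ((iota.submatrix f id) *ᵥ c) j = (iota *ᵥ c) (f j) := rfl
    rw [this, hc, Finset.sum_apply, Finset.sum_eq_single j]
    · simp [hx j (f j) (hT j)]
    · intro i _ hij
      simp [hx i (f j) (hT j), Pi.single_apply, hf.eq_iff, hij.symm]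
    · simp
  have hu := (Matrix.isUnit_iff_isUnit_det _).1 (Matrix.mulVec_surjective_iff_isUnit.1 hs)
  rcases Int.isUnit_iff.1 hu with h | h <;> simp [h]

theorem aux_zero (hne : ∀ k, head k ≠ tail k)
    (hdel : ∀ v k, del v k = if v = head k then 1 else if v = tail k then -1 else 0)
    (G : SimpleGraph (Fin (n + 1))) (hG : G.Connected)
    (hsurj : ∀ e ∈ G.edgeSet, ∃ k, s(head k, tail k) = e)
    (iota : Matrix (Fin m) (Fin g) ℤ) (h0 : del * iota = 0)
    (f : Fin g → Fin m) (hf : Function.Injective f) (T : Finset (Fin m))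
    (hT : ∀ k ∉ T, ∃ i, f i = k)
    (hc : ¬ (SimpleGraph.fromEdgeSet
      ((fun k => s(head k, tail k)) '' (T : Set (Fin m)))).Connected) :
    (iota.submatrix f id).det = 0 := by
  classical
  set H := SimpleGraph.fromEdgeSet ((fun k => s(head k, tail k)) '' (T : Set (Fin m))) with hH
  have hpre : ¬ H.Preconnected := fun h => hc ⟨h⟩
  simp only [SimpleGraph.Preconnected, not_forall] at hpre
  obtain ⟨a, b, hab⟩ := hpre
  let p : Fin (n + 1) → ℤ := fun v => if H.Reachable a v then 1 else 0
  have hTz : ∀ k ∈ T, (p ᵥ* del) k = 0 := by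
    intro k hk
    rw [aux_vecdel hne hdel]
    have hadj : H.Adj (head k) (tail k) := by
      rw [hH, SimpleGraph.fromEdgeSet_adj]
      exact ⟨⟨k, hk, rfl⟩, hne k⟩
    have : H.Reachable a (head k) ↔ H.Reachable a (tail k) :=
      ⟨fun h => h.trans hadj.reachable, fun h => h.trans hadj.symm.reachable⟩
    simp [p, this]
  rw [← Matrix.exists_vecMul_eq_zero_iff]
  refine ⟨fun i => (p ᵥ* del) (f i), ?_, ?_⟩
  · intro hz
    have hall : ∀ k, p (head k) = p (tail k) := by
      intro k
      have : (p ᵥ* del) k = 0 := by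
        by_cases hk : k ∈ T
        · exact hTz k hk
        · obtain ⟨i, rfl⟩ := hT k hk
          exact congrFun hz i
      rw [aux_vecdel hne hdel] at this
      linarith
    have hw : ∀ u v, G.Walk u v → p u = p v := by
      intro u v w
      induction w with
      | nil => rfl
      | cons h _ ih =>
        rw [← ih]
        obtain ⟨k, hk⟩ := hsurj _ (G.mem_edgeSet.2 h)
        rcases Sym2.eq_iff.1 hk with ⟨h1, h2⟩ | ⟨h1, h2⟩
        · rw [← h1, ← h2, hall]
        · rw [← h1, ← h2, hall]
    have := hw a b (hG.preconnected a b).some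
    simp [p, hab] at this
  · have hfull : (p ᵥ* del) ᵥ* iota = 0 := by rw [vecMul_vecMul, h0]; simp
    ext j
    have hj := congrFun hfull j
    simp only [vecMul, dotProduct, Pi.zero_apply, submatrix_apply, id] at hj ⊢
    rw [← hj]
    refine Finset.sum_of_injOn f hf.injOn (by simp) ?_ (by simp)
    intro k _ hk
    have hkT : k ∈ T := by
      by_contra h
      obtain ⟨i, hi⟩ := hT k h
      exact hk ⟨i, by simp, hi⟩
    have := hTz k hkT
    simp only [vecMul, dotProduct] at this
    simp [this]

theorem aux_edge (hne : ∀ k, head k ≠ tail k)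
    (hinj : Function.Injective fun k => s(head k, tail k)) (T : Finset (Fin m)) :
    Nat.card (SimpleGraph.fromEdgeSet
      ((fun k => s(head k, tail k)) '' (T : Set (Fin m)))).edgeSet = T.card := by
  have : (SimpleGraph.fromEdgeSet ((fun k => s(head k, tail k)) '' (T : Set (Fin m)))).edgeSet
      = (fun k => s(head k, tail k)) '' (T : Set (Fin m)) := by
    rw [SimpleGraph.edgeSet_fromEdgeSet, sdiff_eq_left, Set.disjoint_left]
    rintro _ ⟨k, -, rfl⟩ h
    exact hne k (by simpa using h)
  rw [this, Nat.card_image_of_injective hinj]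
  simp

end

/-- For a connected simple graph `G` with `n+1` vertices and `m` edges, and `ι` an
integer matrix whose columns form a `ℤ`-basis of the lattice of integral flows
`Flow(G) = ℤ^m ∩ ker ∂`, the order of `ℤ^g / im(ιᵀι)` equals the number of spanning
trees of `G`. -/
theorem stmt_10 (n m g : ℕ) (G : SimpleGraph (Fin (n + 1))) (hG : G.Connected)
    (hg : m = n + g)
    (head tail : Fin m → Fin (n + 1))
    (hadj : ∀ k, G.Adj (head k) (tail k))
    (hinj : Function.Injective fun k => s(head k, tail k))
    (hsurj : ∀ e ∈ G.edgeSet, ∃ k, s(head k, tail k) = e)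
    (del : Matrix (Fin (n + 1)) (Fin m) ℤ)
    (hdel : ∀ v k, del v k = if v = head k then 1 else if v = tail k then -1 else 0)
    (iota : Matrix (Fin m) (Fin g) ℤ)
    (hli : LinearIndependent ℤ iota.transpose)
    (hspan : Submodule.span ℤ (Set.range iota.transpose) = LinearMap.ker (Matrix.toLin' del)) :
    Nat.card ((Fin g → ℤ) ⧸ LinearMap.range (Matrix.toLin' (iota.transpose * iota))) =
      Nat.card {T : Finset (Fin m) //
        (SimpleGraph.fromEdgeSet ((fun k => s(head k, tail k)) '' ↑T)).IsTree} := by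
  classical
  have hne : ∀ k, head k ≠ tail k := fun k => (hadj k).ne
  have hsum : ∀ c : Fin g → ℤ, iota *ᵥ c = ∑ i, c i • iotaᵀ i := by
    intro c
    ext k
    simp [mulVec, dotProduct, Finset.sum_apply, mul_comm]
  have hsp : ∀ z : Fin m → ℤ, del *ᵥ z = 0 → ∃ c, iota *ᵥ c = z := by
    intro z hz
    have : z ∈ Submodule.span ℤ (Set.range iota.transpose) := by
      rw [hspan]; simpa using hz
    obtain ⟨c, hc⟩ := (Submodule.mem_span_range_iff_exists_fun ℤ).1 this
    exact ⟨c, by rw [hsum, hc]⟩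
  have h0 : del * iota = 0 := by
    ext v j
    have : iotaᵀ j ∈ LinearMap.ker (Matrix.toLin' del) := by
      rw [← hspan]; exact Submodule.subset_span ⟨j, rfl⟩
    have := congrFun (LinearMap.mem_ker.1 this) v
    simpa [mulVec, dotProduct, mul_apply] using this
  have hA : ∀ x, (iotaᵀ * iota) *ᵥ x = 0 → x = 0 := by
    intro x hx
    have h1 : (iota *ᵥ x) ⬝ᵥ (iota *ᵥ x) = 0 := by
      have : x ⬝ᵥ ((iotaᵀ * iota) *ᵥ x) = 0 := by rw [hx]; simp
      rw [← mulVec_mulVec, dotProduct_mulVec, vecMul_transpose] at this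
      exact this
    rw [dotProduct_self_eq_zero, hsum] at h1
    funext i
    exact Fintype.linearIndependent_iff.1 hli x h1 i
  rw [aux_card _ hA]
  let tr : Finset (Fin m) → Prop := fun T =>
    (SimpleGraph.fromEdgeSet ((fun k => s(head k, tail k)) '' (T : Set (Fin m)))).IsTree
  have htc : ∀ T, tr T → T.card = n := by
    intro T hT
    have := (SimpleGraph.isTree_iff_connected_and_card.1 hT).2
    rw [aux_edge hne hinj] at this
    simpa using this
  have hterm : ∀ f : Fin g → Fin m, (iota.submatrix f id).det ^ 2 =
      if Function.Injective f ∧ tr (Finset.univ.image f)ᶜ then 1 else 0 := by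
    intro f
    by_cases hf : Function.Injective f
    · by_cases ht : tr (Finset.univ.image f)ᶜ
      · rw [if_pos ⟨hf, ht⟩]
        exact aux_unit hne hdel iota hsp f hf _ (by simp) ht.connected
      · rw [if_neg (fun h => ht h.2)]
        rw [aux_zero hne hdel G hG hsurj iota h0 f hf (Finset.univ.image f)ᶜ (by simp)]
        · simp
        · intro hc
          refine ht (SimpleGraph.isTree_iff_connected_and_card.2 ⟨hc, ?_⟩)
          rw [aux_edge hne hinj, Finset.card_compl, Finset.card_image_of_injective _ hf]
          simp [hg]
    · rw [if_neg (fun h => hf h.1)]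
      simp only [Function.Injective, not_forall] at hf
      obtain ⟨i, j, hij, hne'⟩ := hf
      rw [Matrix.det_zero_of_row_eq hne' (by ext k; simp [hij])]
      simp
  have hcb := aux_cb iota
  simp only [hterm] at hcb
  have hcnt : (∑ f : Fin g → Fin m,
      if Function.Injective f ∧ tr (Finset.univ.image f)ᶜ then (1 : ℤ) else 0)
      = (g.factorial : ℤ) * (Finset.univ.filter tr).card := by
    rw [Finset.sum_boole]
    norm_cast
    rw [Finset.card_eq_sum_card_fiberwise (f := fun f => (Finset.univ.image f)ᶜ)
      (t := Finset.univ.filter tr)]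
    · rw [Finset.sum_const_nat (m := g.factorial), mul_comm]
      intro T hT
      have hT' : tr T := by simpa using hT
      rw [← aux_count Tᶜ (g := g) (by rw [Finset.card_compl, htc T hT']; simp [hg]),
        Fintype.card_subtype]
      congr 1
      ext f
      simp only [Finset.mem_filter, Finset.mem_univ, true_and]
      constructor
      · rintro ⟨⟨h1, -⟩, h2⟩
        exact ⟨h1, by rw [← h2, compl_compl]⟩
      · rintro ⟨h1, h2⟩
        rw [h2, compl_compl]
        exact ⟨⟨h1, hT'⟩, rfl⟩
    · intro f hf
      simp only [Finset.coe_filter, Finset.mem_univ, true_and, Set.mem_setOf_eq] at hf ⊢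
      exact hf.2
  rw [hcnt] at hcb
  have hfin := mul_left_cancel₀ (by exact_mod_cast g.factorial_ne_zero) hcb
  rw [hfin, Int.natAbs_natCast, Nat.card_eq_fintype_card, Fintype.card_subtype]
end

section
/- Let G be a connected simple graph with m edges and n+1 vertices, and suppose iota is an m-by-g integer matrix whose columns form a Z-basis of Flow(G) with pairwise nonpositive inner products (a cycle M-basis). Then the number of equivalence classes of Z^g modulo the Z-image of L* = iota^T iota is finite and equals the number of spanning trees of G. -/
open Matrix

theorem cb_aux (m g : ℕ) (A B : Matrix (Fin m) (Fin g) ℤ) :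
    (Aᵀ * B).det = ∑ f : Fin g → Fin m, (∏ i, A (f i) i) * (B.submatrix f id).det := by
  have h1 : (Aᵀ * B) = Matrix.of (fun i => ∑ k, A k i • B k) := by
    ext i j
    simp [Matrix.mul_apply, Finset.sum_apply]
  rw [h1]
  have h2 := (Matrix.detRowAlternating (R := ℤ) (n := Fin g)).toMultilinearMap.map_sum
    (fun i (k : Fin m) => A k i • B k)
  refine Eq.trans h2 ?_
  refine Finset.sum_congr rfl fun f _ => ?_
  refine Eq.trans (MultilinearMap.map_smul_univ _ (fun i => A (f i) i) (fun i => B (f i))) ?_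
  rfl

theorem cb (m g : ℕ) (A : Matrix (Fin m) (Fin g) ℤ) (P : Finset (Fin m) → Prop) [DecidablePred P]
    (h1 : ∀ f : Fin g → Fin m, Function.Injective f → P (Finset.univ.image f) →
      (A.submatrix f id).det ^ 2 = 1)
    (h0 : ∀ f : Fin g → Fin m, Function.Injective f → ¬ P (Finset.univ.image f) →
      (A.submatrix f id).det = 0)
    (hP : ∀ S, P S → S.card = g) :
    (Aᵀ * A).det = ((Finset.univ.filter P).card : ℤ) := by
  classical
  rw [cb_aux, ← Finset.sum_fiberwise (g := fun f : Fin g → Fin m => Finset.univ.image f),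
    Finset.card_filter]
  push_cast
  refine Finset.sum_congr rfl fun S _ => ?_
  split_ifs with hS
  · have hc := hP S hS
    let e := S.orderEmbOfFin hc
    have heS : Finset.univ.image e = S := by
      simp [e]
    rw [← h1 e e.injective (by rw [heS]; exact hS)]
    have : (A.submatrix e id).det ^ 2 = ∑ σ : Equiv.Perm (Fin g),
        (∏ i, A (e (σ i)) i) * (A.submatrix (e ∘ σ) id).det := by
      have : ∀ σ : Equiv.Perm (Fin g), (A.submatrix (e ∘ σ) id).det
          = ((Equiv.Perm.sign σ : ℤˣ) : ℤ) * (A.submatrix e id).det := fun σ => by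
        exact Matrix.det_permute σ (A.submatrix e id)
      simp only [this]
      rw [sq]
      nth_rewrite 1 [Matrix.det_apply']
      rw [Finset.sum_mul]
      refine Finset.sum_congr rfl fun σ _ => ?_
      simp only [Matrix.submatrix_apply, id, Int.cast_id]
      ring
    rw [this]
    symm
    refine Finset.sum_bij (fun σ _ => e ∘ σ) ?_ ?_ ?_ ?_
    · intro σ _
      simp only [Finset.mem_filter, Finset.mem_univ, true_and]
      rw [← Finset.image_image, Finset.image_univ_equiv, heS]
    · intro σ _ τ _ h
      refine Equiv.ext fun i => ?_
      have := congrFun h i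
      simpa using this
    · intro f hf
      simp only [Finset.mem_filter, Finset.mem_univ, true_and] at hf
      have hfi : Function.Injective f := by
        have : (Finset.univ.image f).card = (Finset.univ : Finset (Fin g)).card := by
          rw [hf, hc]; simp
        simpa using Finset.card_image_iff.mp this
      have : ∀ i, ∃ j, e j = f i := fun i => by
        have : f i ∈ Finset.univ.image e := by rw [heS, ← hf]; simp
        simpa using this
      choose s hs using this
      have hsi : Function.Injective s := fun i j h => hfi (by rw [← hs, ← hs, h])
      refine ⟨Equiv.ofBijective s (Finite.injective_iff_bijective.mp hsi), Finset.mem_univ _, ?_⟩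
      ext i
      simp [hs]
    · intro σ _
      rfl
  · refine Finset.sum_eq_zero fun f hf => ?_
    simp only [Finset.mem_filter, Finset.mem_univ, true_and] at hf
    by_cases hfi : Function.Injective f
    · rw [h0 f hfi (by rw [hf]; exact hS), mul_zero]
    · simp only [Function.Injective, not_forall] at hfi
      obtain ⟨i, j, hij, hne⟩ := hfi
      rw [Matrix.det_zero_of_row_eq hne (by ext k; simp [hij]), mul_zero]

theorem card_quot (g : ℕ) (M : Matrix (Fin g) (Fin g) ℤ) (h : M.det ≠ 0) :
    Nat.card ((Fin g → ℤ) ⧸ LinearMap.range (Matrix.toLin' M)) = M.det.natAbs := by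
  have hinj : Function.Injective (Matrix.toLin' M) := by
    rw [← LinearMap.ker_eq_bot, LinearMap.ker_eq_bot']
    intro x hx
    exact Matrix.eq_zero_of_mulVec_eq_zero h (by simpa using hx)
  have := Submodule.natAbs_det_equiv (LinearMap.range (Matrix.toLin' M))
    (LinearEquiv.ofInjective (Matrix.toLin' M) hinj)
  rw [← this, ← LinearMap.det_toLin' M]
  rfl

theorem path_flow {n m : ℕ} (head tail : Fin m → Fin (n + 1))
    (del : Matrix (Fin (n + 1)) (Fin m) ℤ)
    (hdel : ∀ k, del *ᵥ (Pi.single k 1) = Pi.single (head k) 1 - Pi.single (tail k) 1)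
    (T : Finset (Fin m)) (u v : Fin (n + 1))
    (h : (SimpleGraph.fromEdgeSet ((fun k => s(head k, tail k)) '' ↑T)).Reachable u v) :
    ∃ x : Fin m → ℤ, (∀ k, k ∉ T → x k = 0) ∧ del *ᵥ x = Pi.single u 1 - Pi.single v 1 := by
  obtain ⟨p⟩ := h
  induction p with
  | nil => exact ⟨0, by simp, by simp⟩
  | @cons a b c hab p ih =>
    obtain ⟨x, hx, hx'⟩ := ih
    rw [SimpleGraph.fromEdgeSet_adj] at hab
    obtain ⟨⟨k, hk, hke⟩, _⟩ := hab
    have hs : ∀ j, j ∉ T → (Pi.single k 1 : Fin m → ℤ) j = 0 := fun j hj => by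
      rw [Pi.single_apply, if_neg]
      rintro rfl; exact hj hk
    rcases Sym2.eq_iff.mp hke with ⟨h1, h2⟩ | ⟨h1, h2⟩
    · refine ⟨Pi.single k 1 + x, fun j hj => by simp [hs j hj, hx j hj], ?_⟩
      rw [Matrix.mulVec_add, hdel, hx', h1, h2]; abel
    · refine ⟨-Pi.single k 1 + x, fun j hj => by simp [hs j hj, hx j hj], ?_⟩
      rw [Matrix.mulVec_add, Matrix.mulVec_neg, hdel, hx', h1, h2]; abel

theorem cut_exists {V : Type*} (G : SimpleGraph V) (hG : G.Connected) (φ : V → ℤ)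
    (h : ∀ a b, G.Adj a b → φ a = φ b) (u v : V) : φ u = φ v := by
  obtain ⟨p⟩ := hG.preconnected u v
  induction p with
  | nil => rfl
  | cons hab p ih => exact (h _ _ hab).trans ih

/-- If the columns of `ι` form a cycle `M`-basis of the flow lattice of a connected
simple graph `G` (a `ℤ`-basis with pairwise nonpositive inner products), then the
set of equivalence classes of `ℤ^g` modulo the `ℤ`-image of `L* = ιᵀι` is finite,
of cardinality the number of spanning trees of `G`. -/
theorem stmt_19 (n m g : ℕ) (G : SimpleGraph (Fin (n + 1))) (hG : G.Connected)
    (hg : m = n + g)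
    (head tail : Fin m → Fin (n + 1))
    (hadj : ∀ k, G.Adj (head k) (tail k))
    (hinj : Function.Injective fun k => s(head k, tail k))
    (hsurj : ∀ e ∈ G.edgeSet, ∃ k, s(head k, tail k) = e)
    (del : Matrix (Fin (n + 1)) (Fin m) ℤ)
    (hdel : ∀ v k, del v k = if v = head k then 1 else if v = tail k then -1 else 0)
    (iota : Matrix (Fin m) (Fin g) ℤ)
    (hli : LinearIndependent ℤ iota.transpose)
    (hspan : Submodule.span ℤ (Set.range iota.transpose) = LinearMap.ker (Matrix.toLin' del))
    (hM : ∀ i j, i ≠ j → iota.transpose i ⬝ᵥ iota.transpose j ≤ 0) :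
    Finite ((Fin g → ℤ) ⧸ LinearMap.range (Matrix.toLin' (iota.transpose * iota))) ∧
    Nat.card ((Fin g → ℤ) ⧸ LinearMap.range (Matrix.toLin' (iota.transpose * iota))) =
      Nat.card {T : Finset (Fin m) //
        (SimpleGraph.fromEdgeSet ((fun k => s(head k, tail k)) '' ↑T)).IsTree} := by
  classical
  have hne : ∀ k, head k ≠ tail k := fun k => (hadj k).ne
  have hdel1 : ∀ k, del *ᵥ (Pi.single k 1) = Pi.single (head k) 1 - Pi.single (tail k) 1 := by
    intro k
    ext v
    have := hne k
    have := (hne k).symm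
    simp only [Matrix.mulVec_single_one, Matrix.col_apply, hdel, Pi.sub_apply, Pi.single_apply]
    split_ifs <;> simp_all
  have hvec : ∀ (φ : Fin (n+1) → ℤ) k, (φ ᵥ* del) k = φ (head k) - φ (tail k) := by
    intro φ k
    have : (φ ᵥ* del) k = φ ⬝ᵥ (del *ᵥ Pi.single k 1) := by
      rw [Matrix.dotProduct_mulVec]; simp
    rw [this, hdel1]; simp [dotProduct_sub]
  have hdi : ∀ c, del *ᵥ (iota *ᵥ c) = 0 := by
    intro c
    have : iota *ᵥ c ∈ Submodule.span ℤ (Set.range iota.transpose) := by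
      rw [Matrix.mulVec_eq_sum]
      refine Submodule.sum_mem _ fun i _ => ?_
      rw [op_smul_eq_smul]
      exact Submodule.smul_mem _ _ (Submodule.subset_span ⟨i, rfl⟩)
    rw [hspan] at this
    simpa using this
  have hflow : ∀ x, del *ᵥ x = 0 → ∃ c, iota *ᵥ c = x := by
    intro x hx
    have : x ∈ Submodule.span ℤ (Set.range iota.transpose) := by
      rw [hspan]; simpa using hx
    obtain ⟨c, hc⟩ := (Submodule.mem_span_range_iff_exists_fun ℤ).mp this
    refine ⟨c, ?_⟩
    rw [Matrix.mulVec_eq_sum, ← hc]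
    refine Finset.sum_congr rfl fun i _ => ?_
    ext; simp [mul_comm]
  have hinj0 : ∀ c, iota *ᵥ c = 0 → c = 0 := by
    intro c hc
    rw [Matrix.mulVec_eq_sum] at hc
    ext i
    exact (Fintype.linearIndependent_iff.mp hli) c (by
      rw [← hc]
      refine Finset.sum_congr rfl fun i _ => ?_
      ext; simp [mul_comm]) i
  have hdet : (iota.transpose * iota).det ≠ 0 := by
    intro h0
    obtain ⟨c, hc, hc0⟩ := Matrix.exists_mulVec_eq_zero_iff.mpr h0
    apply hc
    apply hinj0
    rw [← dotProduct_self_eq_zero]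
    rw [← Matrix.mulVec_mulVec] at hc0
    rw [Matrix.dotProduct_mulVec, ← Matrix.mulVec_transpose, hc0, zero_dotProduct]
  let tr : Finset (Fin m) → SimpleGraph (Fin (n+1)) := fun T =>
    SimpleGraph.fromEdgeSet ((fun k => s(head k, tail k)) '' (T : Set (Fin m)))
  have hedge : ∀ T, Nat.card (tr T).edgeSet = T.card := by
    intro T
    have : (tr T).edgeSet = ((fun k => s(head k, tail k)) '' (T : Set (Fin m))) := by
      simp only [tr, SimpleGraph.edgeSet_fromEdgeSet]
      rw [sdiff_eq_left, Set.disjoint_left]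
      rintro _ ⟨k, _, rfl⟩ hk
      exact hne k (by simpa using hk)
    rw [this, Nat.card_image_of_injective hinj]
    simp
  have htree : ∀ T, (tr T).IsTree ↔ (tr T).Connected ∧ T.card = n := by
    intro T
    rw [SimpleGraph.isTree_iff_connected_and_card, hedge]
    simp
  have hmain := cb m g iota (fun S => (tr Sᶜ).IsTree) ?_ ?_ ?_
  · have hcard := card_quot g _ hdet
    have hfin : Nat.card ((Fin g → ℤ) ⧸ LinearMap.range (Matrix.toLin' (iota.transpose * iota))) ≠ 0 := by
      rw [hcard]; simpa using hdet
    refine ⟨Nat.finite_of_card_ne_zero hfin, ?_⟩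
    rw [hcard, hmain, Int.natAbs_natCast]
    rw [← Fintype.card_subtype, ← Nat.card_eq_fintype_card]
    exact Nat.card_congr ((Equiv.subtypeEquiv (Equiv.ofBijective (compl : Finset (Fin m) → _) compl_bijective) (fun S => Iff.rfl)))
  · intro f hf hT
    have hcon := ((htree _).mp hT).1
    have : ∀ j : Fin g, ∃ c : Fin g → ℤ, ∀ i, (iota *ᵥ c) (f i) = if i = j then 1 else 0 := by
      intro j
      obtain ⟨x, hx, hx'⟩ := path_flow head tail del hdel1 _ _ _
        (hcon.preconnected (head (f j)) (tail (f j)))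
      obtain ⟨c, hc⟩ := hflow (Pi.single (f j) 1 - x) (by
        rw [Matrix.mulVec_sub, hx', hdel1, sub_self])
      refine ⟨c, fun i => ?_⟩
      rw [hc, Pi.sub_apply, hx (f i) (by simp), Pi.single_apply, sub_zero]
      simp [hf.eq_iff]
    choose c hc using this
    have hmul : (iota.submatrix f id) * (Matrix.of fun i j => c j i) = 1 := by
      ext i j
      rw [Matrix.one_apply, ← hc j i]
      simp [Matrix.mul_apply, Matrix.mulVec, dotProduct]
    have hu : IsUnit (iota.submatrix f id).det := by
      have := congrArg Matrix.det hmul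
      rw [Matrix.det_mul, Matrix.det_one] at this
      exact IsUnit.of_mul_eq_one _ this
    exact Int.isUnit_sq hu
  · intro f hf hT
    have hcard : (Finset.univ.image f)ᶜ.card = n := by
      rw [Finset.card_compl, Finset.card_image_of_injective _ hf]
      simp; omega
    have hnc : ¬ (tr (Finset.univ.image f)ᶜ).Connected := fun h => hT ((htree _).mpr ⟨h, hcard⟩)
    have : ¬ (tr (Finset.univ.image f)ᶜ).Preconnected := fun h =>
      hnc ⟨h⟩
    simp only [SimpleGraph.Preconnected, not_forall] at this
    obtain ⟨u, v, huv⟩ := this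
    let φ : Fin (n+1) → ℤ := fun w => if (tr (Finset.univ.image f)ᶜ).Reachable u w then 1 else 0
    have hsupp : ∀ k, k ∉ Set.range f → (φ ᵥ* del) k = 0 := by
      intro k hk
      rw [hvec, sub_eq_zero]
      have hadjk : (tr (Finset.univ.image f)ᶜ).Adj (head k) (tail k) := by
        simp only [tr, SimpleGraph.fromEdgeSet_adj]
        exact ⟨⟨k, by simpa using hk, rfl⟩, hne k⟩
      have : (tr (Finset.univ.image f)ᶜ).Reachable u (head k) ↔ (tr (Finset.univ.image f)ᶜ).Reachable u (tail k) :=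
        ⟨fun h => h.trans hadjk.reachable, fun h => h.trans hadjk.symm.reachable⟩
      simp only [φ, this]
    rw [← Matrix.exists_vecMul_eq_zero_iff]
    refine ⟨fun i => (φ ᵥ* del) (f i), ?_, ?_⟩
    · intro h0
      have hz : ∀ k, φ (head k) = φ (tail k) := by
        intro k
        rw [← sub_eq_zero, ← hvec]
        by_cases hk : k ∈ Set.range f
        · obtain ⟨i, rfl⟩ := hk
          exact congrFun h0 i
        · exact hsupp k hk
      have := cut_exists G hG φ (by
        intro a b hab
        obtain ⟨k, hk⟩ := hsurj s(a, b) hab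
        rcases Sym2.eq_iff.mp hk with ⟨h1, h2⟩ | ⟨h1, h2⟩
        · rw [← h1, ← h2, hz]
        · rw [← h1, ← h2, hz]) u v
      simp [φ, huv] at this
    · ext j
      have h3 : ((φ ᵥ* del) ᵥ* iota) j = 0 := by
        have : ((φ ᵥ* del) ᵥ* iota) j = φ ⬝ᵥ (del *ᵥ (iota *ᵥ Pi.single j 1)) := by
          rw [Matrix.dotProduct_mulVec, Matrix.dotProduct_mulVec]; simp
        rw [this, hdi]; simp
      rw [Pi.zero_apply, ← h3]
      simp only [Matrix.vecMul, dotProduct, Matrix.submatrix_apply, id]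
      refine Finset.sum_of_injOn f hf.injOn (by simp) ?_ (by simp)
      intro k _ hk
      have := hsupp k (by simpa using hk)
      simp only [Matrix.vecMul, dotProduct] at this
      rw [this, zero_mul]
  · intro S hS
    have := ((htree _).mp hS).2
    rw [Finset.card_compl, Fintype.card_fin] at this
    have h2 := Finset.card_le_univ S
    rw [Fintype.card_fin] at h2
    omega
end
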